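/- There is an absolute constant C such that for every s ∈ (0,1], the function T[L_s](y) := (1/π)∫_ℝ (Δ_α L_s(y))² · F'(⨍_α L_s(y)) dα, where F(t) := 1/(1+t²) and F'(t) = −2t/(1+t²)², satisfies ( ∫_ℝ |T[L_s](y)|^{4/3} dy )^{3/4} + ( ∫_ℝ |T[L_s](y)|² dy )^{1/2} ≤ C·s³. -/

import Mathlib

/-!
The bound needs no cancellation in `α`. Since `|arctan| ≤ π/2`, both `L_s` and its averages are
bounded by `s`, so the kernel `F'(⨍_α L_s)` is at most `2s` in absolute value. The function
`x ↦ x arctan x` is Lipschitz, hence `(1 + |x|) |arctan x - arctan z| ≤ K |x - z|`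
(`arctan_sub_decay`). Together with `|arctan x - arctan z| ≤ π` this gives
`(Δ_α L_s(y))² ≤ C s² / (α² + (1 + |y|)²)` (`slopeOp_sq_le`), whose integral over `α` is
`C π s² / (1 + |y|)`. Therefore `|T[L_s](y)| ≤ C s³ / (1 + |y|)` (`abs_TLs_le`), and
`1 / (1 + |y|)` lies in `L^p` for every `p > 1`, in particular for `p = 4/3` and `p = 2`.
-/

open MeasureTheory Real Set Filter

/-- Sliding average `⨍_α f(y) = (1/α) ∫_{y-α}^{y} f(z) dz`. -/
noncomputable def fint (α : ℝ) (f : ℝ → ℝ) (y : ℝ) : ℝ :=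
  (1 / α) * ∫ z in (y - α)..y, f z

/-- Finite difference slope `Δ_α f(y) = (f(y) - f(y-α))/α`. -/
noncomputable def slopeOp (α : ℝ) (f : ℝ → ℝ) (y : ℝ) : ℝ :=
  (f y - f (y - α)) / α

/-- The profile `L_s(y) = (2s/π) arctan((1+s²/3) y)`. -/
noncomputable def Ls (s y : ℝ) : ℝ := (2 * s / Real.pi) * Real.arctan ((1 + s ^ 2 / 3) * y)

/-- `δ_α[f,g](y) = ⨍_α f ⨍_α g - ⨍_{-α} f ⨍_{-α} g`. -/
noncomputable def deltaOp (α : ℝ) (f g : ℝ → ℝ) (y : ℝ) : ℝ :=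
  fint α f y * fint α g y - fint (-α) f y * fint (-α) g y

/-- `J_α[f,g](y) = ⨍_α f ⨍_α g - 2 f g + ⨍_{-α} f ⨍_{-α} g`. -/
noncomputable def Jop (α : ℝ) (f g : ℝ → ℝ) (y : ℝ) : ℝ :=
  fint α f y * fint α g y - 2 * f y * g y + fint (-α) f y * fint (-α) g y

/-- The `H¹` norm `(∫ g² + ∫ (g')²)^{1/2}`. -/
noncomputable def H1norm (g : ℝ → ℝ) : ℝ :=
  Real.sqrt ((∫ y : ℝ, g y ^ 2) + ∫ y : ℝ, deriv g y ^ 2)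

/-- The semilinear term `T[L_s]`, with `F(t) = 1/(1+t²)`, `F'(t) = -2t/(1+t²)²`. -/
noncomputable def TLs (s y : ℝ) : ℝ :=
  (1 / Real.pi) * ∫ α : ℝ,
    (slopeOp α (Ls s) y) ^ 2 * (-2 * fint α (Ls s) y / (1 + (fint α (Ls s) y) ^ 2) ^ 2)

lemma abs_arctan_le (x : ℝ) : |arctan x| ≤ π / 2 :=
  abs_le.2 ⟨(neg_pi_div_two_lt_arctan x).le, (arctan_lt_pi_div_two x).le⟩

lemma abs_arctan_sub_le (x z : ℝ) : |arctan x - arctan z| ≤ |x - z| := by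
  have h := Convex.norm_image_sub_le_of_norm_hasDerivWithin_le (𝕜 := ℝ) (C := 1)
    (s := univ) (x := z) (y := x) (f := arctan)
    (fun t _ => (hasDerivAt_arctan t).hasDerivWithinAt) (fun t _ => by
      rw [Real.norm_eq_abs, abs_of_nonneg (by positivity), div_le_one (by positivity)]
      nlinarith [sq_nonneg t]) convex_univ (mem_univ _) (mem_univ _)
  simpa using h

lemma abs_mul_arctan_sub_le (x z : ℝ) :
    |x * arctan x - z * arctan z| ≤ (π / 2 + 1) * |x - z| := by
  refine Convex.norm_image_sub_le_of_norm_hasDerivWithin_le (𝕜 := ℝ) (C := π / 2 + 1)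
    (s := univ) (x := z) (y := x) (f := fun t => t * arctan t)
    (fun t _ => ((hasDerivAt_id t).mul (hasDerivAt_arctan t)).hasDerivWithinAt) (fun t _ => ?_)
    convex_univ (mem_univ _) (mem_univ _)
  have h1 : |t * (1 / (1 + t ^ 2))| ≤ 1 := by
    rw [mul_one_div, abs_div, abs_of_pos (by positivity : 0 < 1 + t ^ 2),
      div_le_one (by positivity)]
    nlinarith [sq_abs t, sq_nonneg (|t| - 1), abs_nonneg t]
  have h2 := abs_arctan_le t
  simp only [id, Real.norm_eq_abs, one_mul]
  exact (abs_add_le _ _).trans (by linarith)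

/-- The increments of `arctan` based at `x` gain a factor `1 / (1 + |x|)` over the Lipschitz
bound, from `x (arctan x - arctan z) = (x arctan x - z arctan z) - (x - z) arctan z`. -/
lemma arctan_sub_decay (x z : ℝ) :
    |arctan x - arctan z| * (1 + |x|) ≤ (π + 2) * |x - z| := by
  have h1 := abs_arctan_sub_le x z
  have h2 := abs_mul_arctan_sub_le x z
  have h3 : |(x - z) * arctan z| ≤ |x - z| * (π / 2) := by
    rw [abs_mul]
    exact mul_le_mul_of_nonneg_left (abs_arctan_le z) (abs_nonneg _)
  have h4 : |arctan x - arctan z| * |x| ≤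
      |x * arctan x - z * arctan z| + |(x - z) * arctan z| := by
    rw [← abs_mul]
    refine le_trans (le_of_eq ?_) (abs_sub _ _)
    congr 1
    ring
  linarith

lemma abs_Ls_le {s : ℝ} (hs : 0 < s) (y : ℝ) : |Ls s y| ≤ s := by
  have h := abs_arctan_le ((1 + s ^ 2 / 3) * y)
  have hp := pi_pos
  rw [Ls, abs_mul, abs_of_pos (by positivity : 0 < 2 * s / π)]
  calc 2 * s / π * |arctan ((1 + s ^ 2 / 3) * y)| ≤ 2 * s / π * (π / 2) := by gcongr
    _ = s := by field_simp

lemma abs_fint_le {s : ℝ} (hs : 0 < s) (α y : ℝ) : |fint α (Ls s) y| ≤ s := by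
  have h := intervalIntegral.norm_integral_le_of_norm_le_const (a := y - α) (b := y)
    (f := Ls s) (C := s) (fun x _ => abs_Ls_le hs x)
  rw [sub_sub_cancel, Real.norm_eq_abs] at h
  rw [fint, abs_mul, abs_div, abs_one]
  rcases eq_or_ne α 0 with rfl | hα
  · simpa using hs.le
  · have : 0 < |α| := abs_pos.2 hα
    rw [one_div, inv_mul_le_iff₀ this]
    linarith

/-- The squared slope is dominated by a Cauchy density in `α` of width `1 + |y|`. -/
lemma slopeOp_sq_le {s : ℝ} (hs : 0 < s) (hs1 : s ≤ 1) (α y : ℝ) :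
    slopeOp α (Ls s) y ^ 2 ≤
      (π ^ 2 + (2 * (π + 2)) ^ 2) * s ^ 2 / (α ^ 2 + (1 + |y|) ^ 2) := by
  have hp := pi_pos
  have hm : 0 < 1 + |y| := by positivity
  rcases eq_or_ne α 0 with rfl | hα
  · have h0 : slopeOp 0 (Ls s) y = 0 := by simp [slopeOp]
    rw [h0, zero_pow two_ne_zero]
    positivity
  set c := 1 + s ^ 2 / 3 with hc
  have hc1 : 1 ≤ c := by nlinarith [sq_nonneg s]
  have hc2 : c ≤ 2 := by nlinarith
  set D := |arctan (c * y) - arctan (c * (y - α))| with hD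
  have hD0 : 0 ≤ D := abs_nonneg _
  have hα0 : 0 < |α| := abs_pos.2 hα
  have hDpi : D ≤ π := by
    have h1 := abs_arctan_le (c * y)
    have h2 := abs_arctan_le (c * (y - α))
    exact (abs_sub _ _).trans (by linarith)
  have hDm : D * (1 + |y|) ≤ 2 * (π + 2) * |α| := by
    have h := arctan_sub_decay (c * y) (c * (y - α))
    have e : c * y - c * (y - α) = c * α := by ring
    rw [e, abs_mul, abs_mul, abs_of_pos (by linarith : 0 < c)] at h
    calc D * (1 + |y|) ≤ D * (1 + c * |y|) := by
          gcongr
          nlinarith [abs_nonneg y]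
      _ ≤ (π + 2) * (c * |α|) := h
      _ ≤ (π + 2) * (2 * |α|) := by gcongr
      _ = _ := by ring
  have hsl : slopeOp α (Ls s) y ^ 2 = (2 * s / π) ^ 2 * D ^ 2 / α ^ 2 := by
    rw [hD, sq_abs, slopeOp, Ls, Ls]
    ring
  have h1 : D ^ 2 * α ^ 2 ≤ π ^ 2 * α ^ 2 := by gcongr
  have h2 : D ^ 2 * (1 + |y|) ^ 2 ≤ (2 * (π + 2)) ^ 2 * α ^ 2 := by
    rw [← mul_pow, ← sq_abs α, ← mul_pow]
    gcongr
  have h3 : (2 * s / π) ^ 2 ≤ s ^ 2 := by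
    have : 2 * s / π ≤ s := by
      rw [div_le_iff₀ hp]
      nlinarith [pi_gt_three]
    gcongr
  have hα2 : 0 < α ^ 2 := by positivity
  rw [hsl, div_le_div_iff₀ hα2 (by positivity)]
  calc (2 * s / π) ^ 2 * D ^ 2 * (α ^ 2 + (1 + |y|) ^ 2)
      = (2 * s / π) ^ 2 * (D ^ 2 * α ^ 2 + D ^ 2 * (1 + |y|) ^ 2) := by ring
    _ ≤ s ^ 2 * (π ^ 2 * α ^ 2 + (2 * (π + 2)) ^ 2 * α ^ 2) := by gcongr
    _ = _ := by ring

lemma inv_sq_add_sq_eq {m : ℝ} (hm : 0 < m) (α : ℝ) :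
    (α ^ 2 + m ^ 2)⁻¹ = (m ^ 2)⁻¹ * (1 + (α / m) ^ 2)⁻¹ := by
  rw [← mul_inv]
  congr 1
  field_simp
  ring

lemma integrable_inv_sq_add_sq {m : ℝ} (hm : 0 < m) :
    Integrable fun α : ℝ => (α ^ 2 + m ^ 2)⁻¹ := by
  simp_rw [inv_sq_add_sq_eq hm]
  exact (integrable_inv_one_add_sq.comp_div hm.ne').const_mul _

lemma integral_univ_inv_sq_add_sq {m : ℝ} (hm : 0 < m) :
    ∫ α : ℝ, (α ^ 2 + m ^ 2)⁻¹ = π / m := by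
  simp_rw [inv_sq_add_sq_eq hm]
  rw [integral_const_mul, Measure.integral_comp_div (fun x : ℝ => (1 + x ^ 2)⁻¹) m,
    integral_univ_inv_one_add_sq, abs_of_pos hm, smul_eq_mul]
  field_simp

lemma abs_TLs_le {s : ℝ} (hs : 0 < s) (hs1 : s ≤ 1) (y : ℝ) :
    |TLs s y| ≤ 2 * (π ^ 2 + (2 * (π + 2)) ^ 2) * s ^ 3 * (1 + |y|)⁻¹ := by
  have hp := pi_pos
  have hm : 0 < 1 + |y| := by positivity
  set K := π ^ 2 + (2 * (π + 2)) ^ 2 with hK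
  have hb : ‖∫ α : ℝ, (slopeOp α (Ls s) y) ^ 2 *
      (-2 * fint α (Ls s) y / (1 + (fint α (Ls s) y) ^ 2) ^ 2)‖
      ≤ ∫ α : ℝ, 2 * K * s ^ 3 * (α ^ 2 + (1 + |y|) ^ 2)⁻¹ := by
    refine norm_integral_le_of_norm_le ((integrable_inv_sq_add_sq hm).const_mul _)
      (Eventually.of_forall fun α => ?_)
    have h1 := slopeOp_sq_le hs hs1 α y
    have h2 : |-2 * fint α (Ls s) y / (1 + (fint α (Ls s) y) ^ 2) ^ 2| ≤ 2 * s := by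
      have h := abs_fint_le hs α y
      rw [abs_div, abs_mul, abs_of_pos (by positivity : 0 < (1 + (fint α (Ls s) y) ^ 2) ^ 2)]
      refine (div_le_self (by positivity) (one_le_pow₀ ?_)).trans ?_
      · nlinarith [sq_nonneg (fint α (Ls s) y)]
      · rw [abs_neg, abs_two]
        linarith
    rw [Real.norm_eq_abs, abs_mul, abs_of_nonneg (sq_nonneg _)]
    calc _ ≤ K * s ^ 2 / (α ^ 2 + (1 + |y|) ^ 2) * (2 * s) := by gcongr
      _ = _ := by ring
  rw [integral_const_mul, integral_univ_inv_sq_add_sq hm, Real.norm_eq_abs] at hb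
  rw [TLs, abs_mul, abs_of_pos (by positivity : 0 < 1 / π)]
  calc _ ≤ 1 / π * (2 * K * s ^ 3 * (π / (1 + |y|))) := by gcongr
    _ = _ := by field_simp

/-- A function dominated by `A / (1 + |y|)` has `L^p` norm at most `A ‖1 / (1 + |y|)‖_p`.
No measurability of `f` is required: a non-integrable `|f|^p` has integral `0`. -/
lemma Lp_le_of_decay {f : ℝ → ℝ} {A p : ℝ} (hA : 0 ≤ A) (hp : 1 < p)
    (hf : ∀ y, |f y| ≤ A * (1 + |y|)⁻¹) :
    (∫ y : ℝ, |f y| ^ p) ^ (1 / p) ≤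
      A * (∫ y : ℝ, (1 + ‖y‖) ^ (-p)) ^ (1 / p) := by
  have hp0 : 0 < p := by linarith
  have hi : Integrable fun y : ℝ => (1 + ‖y‖) ^ (-p) :=
    integrable_one_add_norm (by simpa using hp)
  have hle : ∫ y : ℝ, |f y| ^ p ≤ ∫ y : ℝ, A ^ p * (1 + ‖y‖) ^ (-p) := by
    refine integral_mono_of_nonneg (Eventually.of_forall fun y => by positivity)
      (hi.const_mul _) (Eventually.of_forall fun y => ?_)
    have hm : 0 < 1 + |y| := by positivity
    calc |f y| ^ p ≤ (A * (1 + |y|)⁻¹) ^ p := by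
          gcongr
          exact hf y
      _ = A ^ p * (1 + ‖y‖) ^ (-p) := by
          rw [mul_rpow hA (by positivity), Real.norm_eq_abs, rpow_neg hm.le, inv_rpow hm.le]
  rw [integral_const_mul] at hle
  have hI : 0 ≤ ∫ y : ℝ, (1 + ‖y‖) ^ (-p) := integral_nonneg fun y => by positivity
  calc _ ≤ (A ^ p * ∫ y : ℝ, (1 + ‖y‖) ^ (-p)) ^ (1 / p) :=
        rpow_le_rpow (integral_nonneg fun y => by positivity) hle (by positivity)
    _ = _ := by
        rw [mul_rpow (by positivity) hI, ← rpow_mul hA, mul_one_div_cancel hp0.ne', rpow_one]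

/-- `T[L_s]` is of size `s³` in `L^{4/3} ∩ L²`. -/
theorem TLs_bound :
    ∃ C : ℝ, 0 < C ∧ ∀ s : ℝ, 0 < s → s ≤ 1 →
      (∫ y : ℝ, |TLs s y| ^ ((4:ℝ)/3)) ^ ((3:ℝ)/4)
        + (∫ y : ℝ, |TLs s y| ^ 2) ^ ((1:ℝ)/2) ≤ C * s ^ 3 := by
  set K := 2 * (π ^ 2 + (2 * (π + 2)) ^ 2) with hK
  have hK0 : 0 ≤ K := by positivity
  set I₁ := (∫ y : ℝ, (1 + ‖y‖) ^ (-((4:ℝ)/3))) ^ (1 / ((4:ℝ)/3)) with hI₁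
  set I₂ := (∫ y : ℝ, (1 + ‖y‖) ^ (-(2:ℝ))) ^ (1 / (2:ℝ)) with hI₂
  have h1 : 0 ≤ I₁ := rpow_nonneg (integral_nonneg fun y => by positivity) _
  have h2 : 0 ≤ I₂ := rpow_nonneg (integral_nonneg fun y => by positivity) _
  -- The added `1` only secures positivity of the constant.
  refine ⟨K * (I₁ + I₂) + 1, by positivity, fun s hs hs1 => ?_⟩
  have hA : 0 ≤ K * s ^ 3 := by positivity
  have e1 := Lp_le_of_decay (p := 4 / 3) hA (by norm_num) (abs_TLs_le hs hs1)
  have e2 := Lp_le_of_decay (p := 2) hA (by norm_num) (abs_TLs_le hs hs1)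
  rw [← hI₁, show 1 / ((4:ℝ)/3) = 3 / 4 by norm_num] at e1
  rw [← hI₂] at e2
  simp only [rpow_two] at e2
  have : 0 < s ^ 3 := by positivity
  linarith
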